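/- arXiv:1202.0874 — 2 statements merged into one kernel-verified Lean document; each statement's English description precedes it below -/
import Mathlib

section
/- Let p and q be positive integers and let s be a real number with s > 1. Then T(p,s,q;−1,−1) = 2(−1)^p Σ_{k=0}^{⌊p/2⌋} φ(2k) C(p+q−1−2k, q−1) φ(s+p+q−2k) + 2(−1)^p Σ_{k=0}^{⌊q/2⌋} φ(2k) C(p+q−1−2k, p−1) ζ(s+p+q−2k), where C(n,k) denotes the binomial coefficient. -/
open Complex Finset

/-- `φ(s) = (2^{1-s} - 1) ζ(s)`. -/
noncomputable def phi (s : ℂ) : ℂ := ((2 : ℂ) ^ ((1 : ℂ) - s) - 1) * riemannZeta s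

/-- `T(p,s,q;x,y) = Σ_{l ≠ 0, m ≥ 1, l+m ≠ 0} x^l y^m / (l^p m^s (l+m)^q)`. -/
noncomputable def T (p : ℕ) (s : ℂ) (q : ℕ) (x y : ℂ) : ℂ :=
  ∑' lm : ℤ × ℕ,
    if lm.1 ≠ 0 ∧ lm.1 + ((lm.2 : ℤ) + 1) ≠ 0 then
      x ^ lm.1 * y ^ (lm.2 + 1) /
        ((lm.1 : ℂ) ^ p * (((lm.2 + 1 : ℕ) : ℂ)) ^ s *
          (((lm.1 + (lm.2 : ℤ) + 1 : ℤ) : ℂ)) ^ q)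
    else 0

lemma aux_congr {ι : Type*} {f g : ι → ℂ} {a b : ℂ} (h : HasSum f a) (hf : ∀ i, g i = f i)
    (hab : b = a) : HasSum g b := by
  rw [funext hf, hab]; exact h

/-- The zeta series indexed from `0`. -/
lemma aux_hasSum_zeta0 (z : ℂ) (hz : 1 < z.re) :
    HasSum (fun n : ℕ => 1 / (n : ℂ) ^ z) (riemannZeta z) := by
  rw [zeta_eq_tsum_one_div_nat_cpow hz]
  exact (Complex.summable_one_div_nat_cpow.2 hz).hasSum

lemma aux_hasSum_phi0 (z : ℂ) (hz : 1 < z.re) :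
    HasSum (fun n : ℕ => (-1 : ℂ) ^ n * (1 / (n : ℂ) ^ z)) (phi z) := by
  have h0 := aux_hasSum_zeta0 z hz
  have hev : HasSum (fun k : ℕ => 1 / ((2 * k : ℕ) : ℂ) ^ z) ((2 : ℂ) ^ (-z) * riemannZeta z) := by
    have := h0.mul_left ((2 : ℂ) ^ (-z))
    refine this.congr_fun ?_ |> fun h => h
    intro k
    have := Complex.natCast_mul_natCast_cpow 2 k z
    push_cast at this ⊢
    rw [this, Complex.cpow_neg]
    field_simp
  have hod : Summable (fun k : ℕ => 1 / ((2 * k + 1 : ℕ) : ℂ) ^ z) :=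
    h0.summable.comp_injective (i := fun k : ℕ => 2 * k + 1) (fun a b h => by simpa using h)
  have hod' := hod.hasSum
  have hu := (hev.even_add_odd (f := fun n : ℕ => 1 / (n : ℂ) ^ z) hod').unique h0
  have hev2 : HasSum (fun k : ℕ => (-1 : ℂ) ^ (2 * k) * (1 / ((2 * k : ℕ) : ℂ) ^ z))
      ((2 : ℂ) ^ (-z) * riemannZeta z) := by
    simpa [pow_mul] using hev
  have hod2 : HasSum (fun k : ℕ => (-1 : ℂ) ^ (2 * k + 1) * (1 / ((2 * k + 1 : ℕ) : ℂ) ^ z))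
      (-(∑' k : ℕ, 1 / ((2 * k + 1 : ℕ) : ℂ) ^ z)) := by
    simpa [pow_mul, pow_succ] using hod'.neg
  have := hev2.even_add_odd (f := fun n : ℕ => (-1 : ℂ) ^ n * (1 / (n : ℂ) ^ z)) hod2
  convert this using 1
  have h2 : (2 : ℂ) ^ ((1 : ℂ) - z) = 2 * (2 : ℂ) ^ (-z) := by
    rw [sub_eq_add_neg, Complex.cpow_add _ _ two_ne_zero, Complex.cpow_one]
  rw [phi, h2]
  linear_combination hu

lemma aux_hasSum_zeta (z : ℂ) (hz : 1 < z.re) :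
    HasSum (fun n : ℕ => 1 / ((n + 1 : ℕ) : ℂ) ^ z) (riemannZeta z) := by
  have hz0 : z ≠ 0 := by rintro rfl; simp at hz; linarith
  have := (hasSum_nat_add_iff' 1).2 (aux_hasSum_zeta0 z hz)
  simpa [hz0] using this

lemma aux_hasSum_phi (z : ℂ) (hz : 1 < z.re) :
    HasSum (fun n : ℕ => (-1 : ℂ) ^ (n + 1) * (1 / ((n + 1 : ℕ) : ℂ) ^ z)) (phi z) := by
  have hz0 : z ≠ 0 := by rintro rfl; simp at hz; linarith
  have := (hasSum_nat_add_iff' 1).2 (aux_hasSum_phi0 z hz)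
  simpa [hz0] using this

/-- Two-sided alternating sums. -/
noncomputable def auxE (j : ℕ) : ℂ := if Even j then 2 * phi j else 0

lemma auxE_zero : auxE 0 = -1 := by
  simp [auxE, phi, riemannZeta_zero]; norm_num

lemma aux_hasSum_E (j : ℕ) (hj : 2 ≤ j) :
    HasSum (fun l : ℤ => (-1 : ℂ) ^ l / (l : ℂ) ^ j) (auxE j) := by
  have hz : 1 < (j : ℂ).re := by simp; omega
  have h := aux_hasSum_phi0 j hz
  have h1 : HasSum (fun n : ℕ => (-1 : ℂ) ^ (n : ℤ) / ((n : ℤ) : ℂ) ^ j) (phi j) := by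
    simpa [div_eq_mul_inv] using h
  have h2 : HasSum (fun n : ℕ => (-1 : ℂ) ^ (-(n : ℤ)) / ((-(n : ℤ) : ℤ) : ℂ) ^ j)
      ((-1) ^ j * phi j) := by
    refine (h.mul_left ((-1) ^ j)).congr_fun ?_ |> fun h => h
    intro n
    rw [zpow_neg, ← inv_zpow]
    have : (-1 : ℂ) ^ j * (-1) ^ j = 1 := by rw [← mul_pow]; simp
    rw [Int.cast_neg, neg_pow ((n : ℤ) : ℂ)]
    rcases neg_one_pow_eq_or ℂ j with e | e <;> simp [e, div_eq_mul_inv, inv_neg]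
  have h3 := HasSum.of_nat_of_neg (f := fun l : ℤ => (-1 : ℂ) ^ l / (l : ℂ) ^ j) h1 h2
  refine aux_congr h3 (fun _ => rfl) ?_
  have : j ≠ 0 := by omega
  unfold auxE
  split_ifs with he
  · simp [he.neg_one_pow, this]; ring
  · simp [(Nat.not_even_iff_odd.1 he).neg_one_pow, this]

/-- The inner summand. -/
noncomputable def auxF (p q m : ℕ) (l : ℤ) : ℂ :=
  if l ≠ 0 ∧ l + (m : ℤ) ≠ 0 then (-1 : ℂ) ^ l / ((l : ℂ) ^ p * ((l + (m : ℤ) : ℤ) : ℂ) ^ q) else 0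

noncomputable def auxG (p q m : ℕ) : ℂ :=
  ∑ j ∈ range (p + 1), (Nat.multichoose q (p - j) : ℂ) * auxE j * (m : ℂ) ^ j

lemma auxG_rec (p q m : ℕ) : auxG (p + 1) (q + 1) m = auxG (p + 1) q m + auxG p (q + 1) m := by
  unfold auxG
  rw [sum_range_succ, sum_range_succ _ (p + 1)]
  simp only [Nat.sub_self, Nat.multichoose_zero_right]
  have : ∑ j ∈ range (p + 1), ((q + 1).multichoose (p + 1 - j) : ℂ) * auxE j * (m : ℂ) ^ j =
     ∑ j ∈ range (p + 1), (q.multichoose (p + 1 - j) : ℂ) * auxE j * (m : ℂ) ^ j +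
     ∑ j ∈ range (p + 1), ((q + 1).multichoose (p - j) : ℂ) * auxE j * (m : ℂ) ^ j := by
    rw [← sum_add_distrib]
    refine sum_congr rfl fun j hj => ?_
    have hj' : p + 1 - j = p - j + 1 := by have := mem_range.1 hj; omega
    rw [hj', Nat.multichoose_succ_succ]
    push_cast; ring
  rw [this]; ring

lemma auxG_zero_left (q m : ℕ) : auxG 0 q m = -1 := by
  simp [auxG, auxE_zero]

lemma auxG_zero_right (p m : ℕ) : auxG p 0 m = auxE p * (m : ℂ) ^ p := by
  unfold auxG
  rw [sum_range_succ, sum_eq_zero]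
  · simp
  · intro j hj
    have hj' : p - j = p - j - 1 + 1 := by have := mem_range.1 hj; omega
    rw [hj', Nat.multichoose_zero_succ]; simp

lemma auxF_rec (p q m : ℕ) (hm : m ≠ 0) (l : ℤ) :
    auxF (p + 1) (q + 1) m l = (1 / (m : ℂ)) * (auxF (p + 1) q m l - auxF p (q + 1) m l) := by
  unfold auxF
  split_ifs with h
  · obtain ⟨h1, h2⟩ := h
    have h1' : (l : ℂ) ≠ 0 := by exact_mod_cast h1
    have h2' : ((l + (m : ℤ) : ℤ) : ℂ) ≠ 0 := by exact_mod_cast h2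
    have hm' : (m : ℂ) ≠ 0 := by exact_mod_cast hm
    have h3 : (m : ℂ) = ((l + (m : ℤ) : ℤ) : ℂ) - l := by push_cast; ring
    generalize ((l + (m : ℤ) : ℤ) : ℂ) = w at *
    field_simp
    rw [h3]
    ring
  · simp

lemma aux_base_right (p m : ℕ) (hp : 2 ≤ p) (hm : m ≠ 0) :
    HasSum (auxF p 0 m) (auxE p - (-1 : ℂ) ^ m * (-1) ^ p / (m : ℂ) ^ p) := by
  have h := (aux_hasSum_E p hp).sub (hasSum_ite_eq (-(m : ℤ)) ((-1 : ℂ) ^ m * (-1) ^ p / (m : ℂ) ^ p))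
  refine h.congr_fun ?_ |> fun h => h
  intro l
  unfold auxF
  have hp0 : p ≠ 0 := by omega
  have hm' : (m : ℂ) ≠ 0 := by exact_mod_cast hm
  by_cases h1 : l = 0
  · subst h1
    have : (0 : ℤ) ≠ -(m : ℤ) := by omega
    simp [hp0, this, hm]
  · by_cases h2 : l = -(m : ℤ)
    · subst h2
      rcases neg_one_pow_eq_or ℂ p with e | e <;> rcases neg_one_pow_eq_or ℂ m with e' | e' <;>
        simp [neg_pow (m : ℂ), e, e', neg_div, div_neg]
    · have : l + (m : ℤ) ≠ 0 := by omega
      simp [h1, h2, this]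

lemma aux_base_left (q m : ℕ) (hq : 2 ≤ q) (hm : m ≠ 0) :
    HasSum (auxF 0 q m) ((-1 : ℂ) ^ m * auxE q - 1 / (m : ℂ) ^ q) := by
  have h0 := (Equiv.hasSum_iff (Equiv.addRight (m : ℤ))).2 (aux_hasSum_E q hq)
  have h := (h0.mul_left ((-1 : ℂ) ^ m)).sub (hasSum_ite_eq (0 : ℤ) (1 / (m : ℂ) ^ q))
  refine h.congr_fun ?_ |> fun h => h
  intro l
  unfold auxF
  have hq0 : q ≠ 0 := by omega
  have hm' : (m : ℂ) ≠ 0 := by exact_mod_cast hm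
  have hs : (-1 : ℂ) ^ m * (-1) ^ m = 1 := by rw [← mul_pow]; simp
  by_cases h1 : l = 0
  · subst h1
    simp [← mul_div_assoc, hs]
  · by_cases h2 : l + (m : ℤ) = 0
    · simp [h1, h2, hq0, ← Int.cast_natCast (R := ℂ) m, ← Int.cast_add]
    · simp only [h1, h2, ne_eq, not_false_eq_true, and_self, if_true, Function.comp, if_false,
        Equiv.coe_addRight]
      rw [zpow_add₀ (by norm_num), zpow_natCast]
      simp
      linear_combination (-(-1 : ℂ) ^ l / (l + m) ^ q) * hs

/-- Summand for the telescoping argument. -/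
noncomputable def auxH (l : ℤ) : ℂ := (-1 : ℂ) ^ l / (l : ℂ)

lemma auxH_neg (l : ℤ) : auxH (-l) = -auxH l := by
  unfold auxH
  rw [zpow_neg, ← inv_zpow]
  simp [div_neg]

lemma aux_summable_sq_shift (m : ℤ) : Summable (fun l : ℤ => 1 / ((l + m : ℤ) : ℝ) ^ 2) :=
  (Equiv.summable_iff (f := fun l : ℤ => 1 / (l : ℝ) ^ 2) (Equiv.addRight m)).2
    (Real.summable_one_div_int_pow.2 one_lt_two)

lemma auxF_norm_le (p q m : ℕ) (hp : 0 < p) (hq : 0 < q) (l : ℤ) :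
    ‖auxF p q m l‖ ≤ 1 / (l : ℝ) ^ 2 + 1 / ((l + m : ℤ) : ℝ) ^ 2 := by
  unfold auxF
  split_ifs with h
  · obtain ⟨h1, h2⟩ := h
    generalize l + (m : ℤ) = w at *
    have e1 : (1 : ℝ) ≤ |(l : ℝ)| := by exact_mod_cast Int.one_le_abs h1
    have e2 : (1 : ℝ) ≤ |(w : ℝ)| := by exact_mod_cast Int.one_le_abs h2
    rw [norm_div, norm_zpow, norm_neg, norm_one, one_zpow, norm_mul, norm_pow, norm_pow,
      Complex.norm_intCast, Complex.norm_intCast, ← sq_abs (l : ℝ), ← sq_abs (w : ℝ)]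
    generalize |(l : ℝ)| = a at *
    generalize |(w : ℝ)| = b at *
    have ha : a ≤ a ^ p := le_self_pow₀ e1 hp.ne'
    have hb : b ≤ b ^ q := le_self_pow₀ e2 hq.ne'
    have ha0 : 0 < a := by linarith
    have hb0 : 0 < b := by linarith
    have : 1 / (a ^ p * b ^ q) ≤ 1 / (a * b) := by
      apply one_div_le_one_div_of_le (by positivity)
      gcongr
    refine this.trans ?_
    have e3 : 1 / (a * b) = (1 / a) * (1 / b) := by field_simp
    have e4 : 1 / a ^ 2 = (1 / a) ^ 2 := by field_simp
    have e5 : 1 / b ^ 2 = (1 / b) ^ 2 := by field_simp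
    rw [e3, e4, e5]
    nlinarith [sq_nonneg (1 / a - 1 / b), sq_nonneg (1 / a), sq_nonneg (1 / b)]
  · simp; positivity

lemma auxF_summable (p q m : ℕ) (hp : 0 < p) (hq : 0 < q) : Summable (auxF p q m) := by
  refine Summable.of_norm_bounded (g := fun l : ℤ => 1 / (l : ℝ) ^ 2 + 1 / ((l + m : ℤ) : ℝ) ^ 2) ?_
    (auxF_norm_le p q m hp hq)
  exact (Real.summable_one_div_int_pow.2 one_lt_two).add (aux_summable_sq_shift m)

/-- Difference of telescoping summands in terms of `auxF`. -/
lemma auxH_eq (m : ℕ) (hm : m ≠ 0) (l : ℤ) :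
    auxH l - (-1 : ℂ) ^ m * auxH (l + m) = m * auxF 1 1 m l
      + (if l = 0 then -(1 / (m : ℂ)) else 0)
      + (if l = -(m : ℤ) then -((-1 : ℂ) ^ m / m) else 0) := by
  have hs : (-1 : ℂ) ^ m * (-1) ^ m = 1 := by rw [← mul_pow]; simp
  have hm' : (m : ℂ) ≠ 0 := by exact_mod_cast hm
  by_cases h1 : l = 0
  · subst h1
    have : (0 : ℤ) ≠ -(m : ℤ) := by omega
    simp [auxH, auxF, hm, ← mul_div_assoc, hs, neg_div]
  · by_cases h2 : l = -(m : ℤ)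
    · subst h2
      have := auxH_neg m
      rw [this]
      simp [auxH, auxF, hm]
    · have h3 : l + (m : ℤ) ≠ 0 := by omega
      have h1' : (l : ℂ) ≠ 0 := by exact_mod_cast h1
      have h3' : (l : ℂ) + m ≠ 0 := by exact_mod_cast h3
      simp only [auxH, auxF, h1, h2, h3, ne_eq, not_false_eq_true, and_self, if_true, if_false]
      rw [zpow_add₀ (by norm_num), zpow_natCast]
      push_cast
      have : (-1 : ℂ) ^ m * ((-1) ^ l * (-1) ^ m / ((l : ℂ) + m)) = (-1) ^ l / ((l : ℂ) + m) := by
        linear_combination ((-1 : ℂ) ^ l / (l + m)) * hs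
      rw [this]
      field_simp
      ring

lemma auxH_hasSum_one : HasSum (fun l : ℤ => auxH l + auxH (l + 1)) 0 := by
  have hsum : Summable (fun l : ℤ => auxH l + auxH (l + 1)) := by
    have h1 := (((auxF_summable 1 1 1 one_pos one_pos).mul_left ((1 : ℕ) : ℂ)).add
      (hasSum_ite_eq (0 : ℤ) (-(1 / ((1 : ℕ) : ℂ)))).summable).add
      (hasSum_ite_eq (-((1 : ℕ) : ℤ)) (-((-1 : ℂ) ^ 1 / ((1 : ℕ) : ℂ)))).summable
    refine h1.congr ?_
    intro l
    rw [← auxH_eq 1 one_ne_zero l]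
    simp
  obtain ⟨S, hS⟩ := hsum
  have h2 := (Equiv.hasSum_iff (Equiv.subLeft (-1 : ℤ))).2 hS
  have h3 : HasSum (fun l : ℤ => auxH l + auxH (l + 1)) (-S) := by
    refine h2.neg.congr_fun ?_ |> fun h => h
    intro l
    simp only [Function.comp, Equiv.subLeft_apply]
    have e1 : (-1 : ℤ) - l = -(l + 1) := by ring
    have e2 : -(l + 1) + 1 = -l := by ring
    rw [e1, e2, auxH_neg, auxH_neg]; ring
  have : S = -S := hS.unique h3
  have : S = 0 := by linear_combination this / 2
  rwa [this] at hS

lemma auxH_hasSum (m : ℕ) : HasSum (fun l : ℤ => auxH l - (-1 : ℂ) ^ m * auxH (l + m)) 0 := by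
  induction m with
  | zero => simpa using hasSum_zero
  | succ m ih =>
    have h := (Equiv.hasSum_iff (Equiv.addRight (m : ℤ))).2 auxH_hasSum_one
    have h2 := ih.add (h.mul_left ((-1 : ℂ) ^ m))
    simp only [mul_zero, add_zero] at h2
    refine h2.congr_fun ?_ |> fun h => h
    intro l
    simp only [Function.comp, Equiv.coe_addRight, Nat.cast_add, Nat.cast_one, ← add_assoc]
    ring

lemma aux_base_one (m : ℕ) (hm : m ≠ 0) :
    HasSum (auxF 1 1 m) ((1 + (-1 : ℂ) ^ m) / (m : ℂ) ^ 2) := by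
  have hm' : (m : ℂ) ≠ 0 := by exact_mod_cast hm
  have h := (((auxH_hasSum m).sub (hasSum_ite_eq (0 : ℤ) (-(1 / (m : ℂ))))).sub
    (hasSum_ite_eq (-(m : ℤ)) (-((-1 : ℂ) ^ m / m)))).mul_left (1 / (m : ℂ))
  refine aux_congr h ?_ ?_
  · intro l
    rw [auxH_eq m hm l]
    field_simp
    ring
  · field_simp
    ring

noncomputable def auxS (p q m : ℕ) : ℂ :=
  (-1) ^ p / (m : ℂ) ^ (p + q) * (auxG p q m + (-1 : ℂ) ^ m * auxG q p m)

lemma auxF_hasSum (m : ℕ) (hm : m ≠ 0) (n : ℕ) :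
    ∀ p q : ℕ, p + q = n + 2 → HasSum (auxF p q m) (auxS p q m) := by
  have hm' : (m : ℂ) ≠ 0 := by exact_mod_cast hm
  have hR : ∀ p, 2 ≤ p → HasSum (auxF p 0 m) (auxS p 0 m) := by
    intro p hp
    convert aux_base_right p m hp hm using 1
    rw [auxS, auxG_zero_left, auxG_zero_right]
    have : (-1 : ℂ) ^ p * auxE p = auxE p := by
      unfold auxE
      split_ifs with he
      · simp [he.neg_one_pow]
      · simp
    rw [add_zero]
    field_simp
    linear_combination (m : ℂ) ^ p * this
  have hL : ∀ q, 2 ≤ q → HasSum (auxF 0 q m) (auxS 0 q m) := by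
    intro q hq
    convert aux_base_left q m hq hm using 1
    rw [auxS, auxG_zero_left, auxG_zero_right]
    rw [zero_add]
    field_simp
    ring
  induction n with
  | zero =>
    intro p q hpq
    have : (p = 0 ∧ q = 2) ∨ (p = 1 ∧ q = 1) ∨ (p = 2 ∧ q = 0) := by omega
    rcases this with ⟨rfl, rfl⟩ | ⟨rfl, rfl⟩ | ⟨rfl, rfl⟩
    · exact hL 2 le_rfl
    · convert aux_base_one m hm using 1
      have : auxG 1 1 m = -1 := by
        simp [auxG, sum_range_succ, auxE_zero]
        simp [auxE]
      rw [auxS, this]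
      field_simp
      ring
    · exact hR 2 le_rfl
  | succ n ih =>
    intro p q hpq
    rcases p with _ | p
    · exact hL q (by omega)
    rcases q with _ | q
    · exact hR _ (by omega)
    have h := ((ih (p + 1) q (by omega)).sub (ih p (q + 1) (by omega))).mul_left (1 / (m : ℂ))
    refine aux_congr h ?_ ?_
    · intro l
      exact auxF_rec p q m hm l
    · unfold auxS
      rw [auxG_rec p q, auxG_rec q p]
      have e1 : p + 1 + (q + 1) = p + q + 1 + 1 := by ring
      have e2 : p + 1 + q = p + q + 1 := by ring
      have e3 : p + (q + 1) = p + q + 1 := by ring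
      rw [e1, e2, e3]
      field_simp
      ring

lemma aux_even_sum (p : ℕ) (g : ℕ → ℂ) :
    ∑ j ∈ range (p + 1), (if Even j then 2 * g j else 0) =
      2 * ∑ k ∈ range (p / 2 + 1), g (2 * k) := by
  rw [mul_sum]
  symm
  refine sum_of_injOn (fun k => 2 * k) ?_ ?_ ?_ ?_
  · intro a _ b _ h
    simpa using h
  · intro a ha
    simp only [coe_range, Set.mem_Iio] at ha ⊢
    omega
  · intro j hj hj'
    rw [if_neg]
    rintro ⟨k, rfl⟩
    apply hj'
    refine ⟨k, ?_, by simp; ring⟩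
    simp only [coe_range, Set.mem_Iio, mem_range] at hj ⊢
    omega
  · intro k _
    simp

lemma aux_multichoose (p q k : ℕ) (hq : 0 < q) (hk : k ≤ p) :
    Nat.multichoose q (p - k) = Nat.choose (p + q - 1 - k) (q - 1) := by
  rw [Nat.multichoose_eq]
  have e : q + (p - k) - 1 = p + q - 1 - k := by omega
  rw [e]
  exact Nat.choose_symm_of_eq_add (by omega)

lemma aux_final_sum (p q : ℕ) (hq : 0 < q) (Z : ℂ → ℂ) (w : ℂ) :
    ∑ j ∈ range (p + 1), (Nat.multichoose q (p - j) : ℂ) * auxE j * Z (w - j) =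
      2 * ∑ k ∈ range (p / 2 + 1), phi (2 * k) *
          (Nat.choose (p + q - 1 - 2 * k) (q - 1) : ℂ) * Z (w - 2 * k) := by
  have := aux_even_sum p (fun j => phi j * (Nat.choose (p + q - 1 - j) (q - 1) : ℂ) * Z (w - j))
  push_cast at this
  rw [← this]
  refine sum_congr rfl fun j hj => ?_
  rw [aux_multichoose p q j hq (by have := mem_range.1 hj; omega)]
  unfold auxE
  split_ifs <;> ring

lemma aux_outer (p q : ℕ) (Z : ℂ → ℂ) (s : ℝ) (hs : 1 < s) (a : ℕ → ℂ)
    (hZ : ∀ z : ℂ, 1 < z.re → HasSum (fun n : ℕ => a n * (1 / ((n + 1 : ℕ) : ℂ) ^ z)) (Z z)) :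
    HasSum (fun n : ℕ => a n / ((n + 1 : ℕ) : ℂ) ^ (s : ℂ) / ((n + 1 : ℕ) : ℂ) ^ (p + q)
        * auxG p q (n + 1))
      (∑ j ∈ range (p + 1), (Nat.multichoose q (p - j) : ℂ) * auxE j
        * Z ((s : ℂ) + p + q - j)) := by
  have h : ∀ j ∈ range (p + 1), HasSum (fun n : ℕ => (Nat.multichoose q (p - j) : ℂ) * auxE j *
      (a n * (1 / ((n + 1 : ℕ) : ℂ) ^ ((s : ℂ) + p + q - j))))
      ((Nat.multichoose q (p - j) : ℂ) * auxE j * Z ((s : ℂ) + p + q - j)) := by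
    intro j hj
    refine (hZ _ ?_).mul_left _
    have h1 : (j : ℝ) ≤ p := by have := mem_range.1 hj; exact_mod_cast (by omega)
    have h2 : (0 : ℝ) ≤ q := by positivity
    simp
    linarith
  refine aux_congr (hasSum_sum h) ?_ rfl
  intro n
  rw [auxG, mul_sum]
  refine sum_congr rfl fun j hj => ?_
  have hn : ((n + 1 : ℕ) : ℂ) ≠ 0 := by exact_mod_cast Nat.succ_ne_zero n
  have e : ((s : ℂ) + p + q - j) = (s : ℂ) + ((p + q : ℕ) : ℂ) - (j : ℂ) := by push_cast; ring
  rw [e, Complex.cpow_sub _ _ hn, Complex.cpow_add _ _ hn, Complex.cpow_natCast,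
    Complex.cpow_natCast]
  have h3 : ((n + 1 : ℕ) : ℂ) ^ (s : ℂ) ≠ 0 := by simp [Complex.cpow_eq_zero_iff]; norm_cast; simp
  field_simp

/-- The full summand. -/
noncomputable def auxT (p q : ℕ) (s : ℝ) (x : ℕ × ℤ) : ℂ :=
  (-1 : ℂ) ^ (x.1 + 1) / ((x.1 + 1 : ℕ) : ℂ) ^ (s : ℂ) * auxF p q (x.1 + 1) x.2

lemma auxT_summable (p q : ℕ) (hp : 0 < p) (hq : 0 < q) (s : ℝ) (hs : 1 < s) :
    Summable (auxT p q s) := by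
  have hN : Summable (fun n : ℕ => 1 / ((n + 1 : ℕ) : ℝ) ^ s) :=
    (Real.summable_one_div_nat_rpow.2 hs).comp_injective (i := fun n : ℕ => n + 1)
      (fun a b h => by simpa using h)
  have hZ : Summable (fun l : ℤ => 1 / (l : ℝ) ^ 2) := Real.summable_one_div_int_pow.2 one_lt_two
  have h1 : Summable (fun x : ℕ × ℤ => 1 / ((x.1 + 1 : ℕ) : ℝ) ^ s * (1 / (x.2 : ℝ) ^ 2)) :=
    hN.mul_of_nonneg hZ (fun n => by positivity) (fun l => by positivity)
  have h2 : Summable (fun x : ℕ × ℤ => 1 / ((x.1 + 1 : ℕ) : ℝ) ^ s *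
      (1 / ((x.2 + ((x.1 + 1 : ℕ) : ℤ) : ℤ) : ℝ) ^ 2)) := by
    have := h1.comp_injective (i := fun x : ℕ × ℤ => (x.1, x.2 + ((x.1 + 1 : ℕ) : ℤ))) (by
      rintro ⟨a, b⟩ ⟨c, d⟩ h
      simp only [Prod.mk.injEq] at h ⊢
      omega)
    exact this
  refine Summable.of_norm_bounded (h1.add h2) ?_
  rintro ⟨n, l⟩
  have hc : ‖((n + 1 : ℕ) : ℂ) ^ (s : ℂ)‖ = ((n + 1 : ℕ) : ℝ) ^ s := by
    rw [Complex.norm_natCast_cpow_of_pos (Nat.succ_pos n)]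
    simp
  simp only [auxT]
  rw [norm_mul, norm_div, norm_pow, norm_neg, norm_one, one_pow, hc, ← mul_add]
  exact mul_le_mul_of_nonneg_left (auxF_norm_le p q (n + 1) hp hq l) (by positivity)

lemma T_eq_auxT (p q : ℕ) (s : ℝ) :
    T p (s : ℂ) q (-1) (-1) = ∑' x : ℕ × ℤ, auxT p q s x := by
  rw [T, ← (Equiv.prodComm ℕ ℤ).tsum_eq]
  refine tsum_congr ?_
  rintro ⟨n, l⟩
  simp only [Equiv.prodComm_apply, Prod.swap, auxT, auxF]
  push_cast
  simp only [add_assoc]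
  split_ifs
  · field_simp
  · simp

lemma aux_fiber (p q : ℕ) (hp : 0 < p) (hq : 0 < q) (s : ℝ) (n : ℕ) :
    HasSum (fun l : ℤ => auxT p q s (n, l))
      ((-1 : ℂ) ^ (n + 1) / ((n + 1 : ℕ) : ℂ) ^ (s : ℂ) * auxS p q (n + 1)) := by
  have h := auxF_hasSum (n + 1) (Nat.succ_ne_zero n) (p + q - 2) p q (by omega)
  exact aux_congr (h.mul_left ((-1 : ℂ) ^ (n + 1) / ((n + 1 : ℕ) : ℂ) ^ (s : ℂ))) (fun l => rfl) rfl

lemma aux_T_hasSum (p q : ℕ) (hp : 0 < p) (hq : 0 < q) (s : ℝ) (hs : 1 < s) :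
    HasSum (fun n : ℕ => (-1 : ℂ) ^ (n + 1) / ((n + 1 : ℕ) : ℂ) ^ (s : ℂ) * auxS p q (n + 1))
      (T p (s : ℂ) q (-1) (-1)) := by
  rw [T_eq_auxT]
  exact (auxT_summable p q hp hq s hs).hasSum.prod_fiberwise (aux_fiber p q hp hq s)

lemma aux_T_combine (p q n : ℕ) (s : ℝ) :
    (-1 : ℂ) ^ (n + 1) / ((n + 1 : ℕ) : ℂ) ^ (s : ℂ) * auxS p q (n + 1) =
    (-1 : ℂ) ^ p * ((-1 : ℂ) ^ (n + 1) / ((n + 1 : ℕ) : ℂ) ^ (s : ℂ)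
        / ((n + 1 : ℕ) : ℂ) ^ (p + q) * auxG p q (n + 1) +
      1 / ((n + 1 : ℕ) : ℂ) ^ (s : ℂ) / ((n + 1 : ℕ) : ℂ) ^ (q + p) * auxG q p (n + 1)) := by
  have hsq : (-1 : ℂ) ^ (n + 1) * (-1 : ℂ) ^ (n + 1) = 1 := by rw [← mul_pow]; simp
  rw [auxS, Nat.add_comm q p]
  generalize (-1 : ℂ) ^ (n + 1) = t at *
  generalize ((n + 1 : ℕ) : ℂ) ^ (s : ℂ) = u at *
  generalize ((n + 1 : ℕ) : ℂ) ^ (p + q) = v at *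
  linear_combination u⁻¹ * (-1) ^ p / v * auxG q p (n + 1) * hsq

/-- Evaluation of `T(p,s,q;-1,-1)` in terms of `ζ` and `φ`
(Corollary 3.4, last formula, of Komori–Matsumoto–Tsumura). -/
theorem T_eval_negone_negone (p q : ℕ) (hp : 0 < p) (hq : 0 < q) (s : ℝ) (hs : 1 < s) :
    T p (s : ℂ) q (-1) (-1) =
      2 * (-1 : ℂ) ^ p * ∑ k ∈ range (p / 2 + 1), phi (2 * k) *
          (Nat.choose (p + q - 1 - 2 * k) (q - 1) : ℂ) *
          phi ((s : ℂ) + p + q - 2 * k) +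
      2 * (-1 : ℂ) ^ p * ∑ k ∈ range (q / 2 + 1), phi (2 * k) *
          (Nat.choose (p + q - 1 - 2 * k) (p - 1) : ℂ) *
          riemannZeta ((s : ℂ) + p + q - 2 * k) := by
  have hA := aux_outer p q phi s hs (fun n => (-1 : ℂ) ^ (n + 1)) aux_hasSum_phi
  have hB := aux_outer q p riemannZeta s hs (fun _ => 1)
    (fun z hz => aux_congr (aux_hasSum_zeta z hz) (fun n => one_mul _) rfl)
  have h2 := (hA.add hB).mul_left ((-1 : ℂ) ^ p)
  have h3 := (aux_T_hasSum p q hp hq s hs).unique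
    (aux_congr h2 (fun n => aux_T_combine p q n s) rfl)
  have e1 : ((s : ℂ) + q + p) = (s : ℂ) + p + q := by ring
  rw [h3, aux_final_sum p q hq, aux_final_sum q p hp, e1, Nat.add_comm q p]
  ring
end

section
/- Let p and q be positive integers and let s be a real number with s > 1. Then T(p,s,q;−1,i) = 2(−1)^p Σ_{k=0}^{⌊p/2⌋} φ(2k) C(p+q−1−2k, q−1) φ(s+p+q−2k; 1/4) + 2(−1)^p Σ_{k=0}^{⌊q/2⌋} φ(2k) C(p+q−1−2k, p−1) φ(s+p+q−2k; −1/4), where C(n,k) denotes the binomial coefficient. -/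
open Complex Finset

/-- The Lerch value `φ(w;1/4) = Σ_{m ≥ 1} i^m m^{-w}`. -/
noncomputable def phiQuarter (w : ℂ) : ℂ :=
  ∑' m : ℕ, Complex.I ^ (m + 1) / (((m + 1 : ℕ) : ℂ)) ^ w

/-- The Lerch value `φ(w;-1/4) = Σ_{m ≥ 1} (-i)^m m^{-w}`. -/
noncomputable def phiNegQuarter (w : ℂ) : ℂ :=
  ∑' m : ℕ, (-Complex.I) ^ (m + 1) / (((m + 1 : ℕ) : ℂ)) ^ w

/-- Symmetric partial sums. -/
noncomputable def symS (g : ℤ → ℂ) (N : ℕ) : ℂ :=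
  ∑ n ∈ range N, (g n + g (-n)) - g 0

theorem symS_of_hasSum {g : ℤ → ℂ} {a : ℂ} (h : HasSum g a) :
    Filter.Tendsto (symS g) Filter.atTop (nhds a) := by
  have := (h.nat_add_neg.tendsto_sum_nat).sub_const (g 0)
  rw [add_sub_cancel_right] at this
  exact this

theorem symS_shift_one (g : ℤ → ℂ) (N : ℕ) :
    symS (fun l => g (l + 1)) N = symS g N + (g N - g (1 - N)) := by
  induction N with
  | zero => simp [symS]; ring
  | succ N ih =>
    simp only [symS, sum_range_succ, zero_add] at ih ⊢
    have e1 : (1 - ((N + 1 : ℕ) : ℤ)) = -N := by push_cast; ring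
    have e2 : (-(N:ℤ) + 1) = 1 - N := by ring
    rw [e1, e2]
    push_cast
    linear_combination ih

theorem symS_tendsto_shift {g : ℤ → ℂ} {a : ℂ}
    (h1 : Filter.Tendsto g Filter.cofinite (nhds 0))
    (h : Filter.Tendsto (symS g) Filter.atTop (nhds a)) (m : ℕ) :
    Filter.Tendsto (symS (fun l => g (l + m))) Filter.atTop (nhds a) := by
  induction m with
  | zero => simpa using h
  | succ m ih =>
    have hc : Filter.Tendsto (fun l : ℤ => g (l + m)) Filter.cofinite (nhds 0) :=
      h1.comp (add_left_injective (m : ℤ)).tendsto_cofinite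
    have h2 : Filter.Tendsto (fun N : ℕ => g (N + m)) Filter.atTop (nhds 0) := by
      rw [← Nat.cofinite_eq_atTop]
      exact hc.comp (Nat.cast_injective (R := ℤ)).tendsto_cofinite
    have h3 : Filter.Tendsto (fun N : ℕ => g (1 - N + m)) Filter.atTop (nhds 0) := by
      rw [← Nat.cofinite_eq_atTop]
      refine hc.comp (g := fun l : ℤ => g (l + m)) (f := fun N : ℕ => (1 : ℤ) - N) ?_
      apply Function.Injective.tendsto_cofinite
      intro a b hab
      simpa using hab
    have := ih.add (h2.sub h3)
    simp only [sub_zero, add_zero] at this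
    refine this.congr (fun N => ?_)
    rw [← symS_shift_one (fun l => g (l + m)) N]
    congr 1
    ext l
    push_cast
    congr 1
    ring

/-- The alternating monomial. -/
noncomputable def gmon (j : ℕ) (l : ℤ) : ℂ := (-1 : ℂ) ^ l / (l : ℂ) ^ j

/-- full two sided alternating sum. -/
noncomputable def ee (j : ℕ) : ℂ := if Even j then 2 * phi j else 0

theorem norm_neg_one_zpow (l : ℤ) : ‖(-1 : ℂ) ^ l‖ = 1 := by
  rw [norm_zpow]; simp

theorem gmon_tendsto (j : ℕ) (hj : 0 < j) :
    Filter.Tendsto (gmon j) Filter.cofinite (nhds 0) := by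
  rw [tendsto_zero_iff_norm_tendsto_zero]
  have h : Filter.Tendsto (fun l : ℤ => (1 / |(l:ℝ)|)) Filter.cofinite (nhds 0) := by
    have h0 : Summable (fun l : ℤ => (1 / (l:ℝ)^2)) := Real.summable_one_div_int_pow.2 (by norm_num)
    have h1 := (h0.tendsto_cofinite_zero).sqrt
    simp only [Real.sqrt_zero] at h1
    refine h1.congr (fun l => ?_)
    rw [Real.sqrt_div zero_le_one, Real.sqrt_sq_eq_abs, Real.sqrt_one]
  refine squeeze_zero (fun _ => norm_nonneg _) (fun l => ?_) h
  unfold gmon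
  rw [norm_div, norm_neg_one_zpow, norm_pow, Complex.norm_intCast]
  rcases eq_or_ne l 0 with rfl | hl
  · simp [hj.ne']
  · have h1 : (1:ℝ) ≤ |(l:ℝ)| := by exact_mod_cast Int.one_le_abs hl
    apply one_div_le_one_div_of_le (by linarith)
    exact le_self_pow₀ h1 hj.ne'

theorem hasSum_alt (j : ℕ) (hj : 1 < j) :
    HasSum (fun n : ℕ => (-1 : ℂ) ^ n / (n : ℂ) ^ j) (phi j) := by
  have hz : HasSum (fun n : ℕ => 1 / (n : ℂ) ^ j) (riemannZeta j) := by
    rw [zeta_nat_eq_tsum_of_gt_one hj]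
    exact (Complex.summable_one_div_nat_cpow (p := j).2 (by simpa using hj) |>.congr
      (fun n => by simp)).hasSum
  have he : HasSum (fun n : ℕ => 1 / ((2 * n : ℕ) : ℂ) ^ j) ((1 / 2 ^ j) * riemannZeta j) := by
    refine (hz.mul_left (1 / (2:ℂ)^j)).congr_fun ?_
    intro n
    push_cast
    rw [mul_pow]; field_simp
  have ho : HasSum (fun n : ℕ => 1 / ((2 * n + 1 : ℕ) : ℂ) ^ j)
      (riemannZeta j - (1 / 2 ^ j) * riemannZeta j) := by
    have hs : Summable (fun n : ℕ => 1 / ((2 * n + 1 : ℕ) : ℂ) ^ j) :=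
      hz.summable.comp_injective (i := fun n : ℕ => 2 * n + 1) (fun a b h => by simpa using h)
    have := (he.even_add_odd (f := fun n : ℕ => 1 / (n : ℂ) ^ j) hs.hasSum).unique hz
    have h2 : riemannZeta j - (1 / 2 ^ j) * riemannZeta j =
        ∑' n : ℕ, 1 / ((2 * n + 1 : ℕ) : ℂ) ^ j := by
      linear_combination -this
    rw [h2]; exact hs.hasSum
  have := HasSum.even_add_odd (f := fun n : ℕ => (-1 : ℂ) ^ n / (n : ℂ) ^ j)
    (by simpa [pow_mul] using he) (m' := -(riemannZeta j - (1 / 2 ^ j) * riemannZeta j))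
    (by refine ho.neg.congr_fun ?_
        intro n; simp [pow_succ, pow_mul, neg_div])
  convert this using 1
  unfold phi
  rw [Complex.cpow_sub _ _ two_ne_zero]
  simp
  ring

theorem gmon_symS (j : ℕ) (hj : 0 < j) :
    Filter.Tendsto (symS (gmon j)) Filter.atTop (nhds (ee j)) := by
  have hneg : ∀ n : ℕ, gmon j n + gmon j (-n) = (1 + (-1)^j) * ((-1 : ℂ) ^ n / (n : ℂ) ^ j) := by
    intro n
    unfold gmon
    have : (-1 : ℂ)^(-(n:ℤ)) = (-1)^n := by
      rw [zpow_neg, zpow_natCast, ← inv_pow]; norm_num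
    rw [this]
    push_cast
    rw [zpow_natCast, neg_pow (n:ℂ) j]
    rcases neg_one_pow_eq_or ℂ j with h | h <;> rw [h] <;> ring
  have h0 : gmon j 0 = 0 := by simp [gmon, hj.ne']
  have hS : symS (gmon j) = fun N => (1 + (-1)^j) * ∑ n ∈ range N, ((-1 : ℂ) ^ n / (n : ℂ) ^ j) := by
    ext N
    rw [symS, h0, sub_zero, mul_sum]
    exact sum_congr rfl (fun n _ => hneg n)
  rw [hS, ee]
  split_ifs with h
  · have hj1 : 1 < j := by
      rcases h with ⟨r, rfl⟩; omega
    have := ((hasSum_alt j hj1).tendsto_sum_nat).const_mul (1 + (-1)^j)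
    rw [h.neg_one_pow] at this ⊢
    convert this using 2
    norm_num
  · rw [(Nat.not_even_iff_odd.1 h).neg_one_pow]
    simp

theorem ee_zero : ee 0 = -1 := by
  simp [ee, phi, riemannZeta_zero]; norm_num

/-- summand -/
noncomputable def ff (m : ℕ) (p q : ℕ) (l : ℤ) : ℂ :=
  if l ≠ 0 ∧ l + (m : ℤ) ≠ 0 then (-1 : ℂ) ^ l / ((l : ℂ) ^ p * ((l + m : ℤ) : ℂ) ^ q) else 0

/-- half of the value -/
noncomputable def AA (m : ℕ) (p q : ℕ) : ℂ :=
  ∑ i ∈ range (p + 1), ee (p - i) * (Nat.multichoose q i : ℂ) * (1 / (m : ℂ) ^ (i + q))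

noncomputable def VV (m : ℕ) (p q : ℕ) : ℂ :=
  (-1) ^ p * (AA m p q + (-1) ^ m * AA m q p)

theorem AA_rec (m : ℕ) (hm : 0 < m) (p q : ℕ) :
    (m : ℂ) * AA m (p + 1) (q + 1) = AA m (p + 1) q + AA m p (q + 1) := by
  have hm' : (m : ℂ) ≠ 0 := by exact_mod_cast hm.ne'
  unfold AA
  rw [sum_range_succ' _ (p + 1), sum_range_succ' _ (p + 1), mul_add, mul_sum]
  have : ∀ a b c : ℂ, a + b + c = (a + c) + b := by intros; ring
  rw [this, ← sum_add_distrib]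
  congr 1
  · refine sum_congr rfl (fun i _ => ?_)
    rw [Nat.multichoose_succ_succ]
    have : p + 1 - (i + 1) = p - i := by omega
    rw [this]
    push_cast
    field_simp
    ring
  · simp
    field_simp
    ring

theorem VV_rec (m : ℕ) (hm : 0 < m) (p q : ℕ) :
    (m : ℂ) * VV m (p + 1) (q + 1) = VV m (p + 1) q - VV m p (q + 1) := by
  unfold VV
  have h1 := AA_rec m hm p q
  have h2 := AA_rec m hm q p
  rw [pow_succ]
  linear_combination (-(-1)^p) * h1 - (-1)^p * (-1)^m * h2

theorem AA_zero_right (m p : ℕ) : AA m p 0 = ee p := by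
  unfold AA
  rw [sum_range_succ']
  simp [Nat.multichoose_zero_succ]

theorem AA_zero_left (m q : ℕ) : AA m 0 q = - (1 / (m : ℂ) ^ q) := by
  simp [AA, ee_zero]

theorem symS_single (c : ℂ) (k : ℤ) :
    Filter.Tendsto (symS (fun l => if l = k then c else 0)) Filter.atTop (nhds c) :=
  symS_of_hasSum (hasSum_ite_eq k c)

theorem symS_sub (f g : ℤ → ℂ) (N : ℕ) : symS (fun l => f l - g l) N = symS f N - symS g N := by
  simp only [symS, sum_add_distrib, sum_sub_distrib]; ring

theorem symS_mul (c : ℂ) (f : ℤ → ℂ) (N : ℕ) : symS (fun l => c * f l) N = c * symS f N := by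
  simp only [symS, sum_add_distrib, ← mul_sum]; ring

theorem neg_one_zpow_neg (m : ℕ) : (-1 : ℂ)^(-(m:ℤ)) = (-1)^m := by
  rw [zpow_neg, zpow_natCast, ← inv_pow]; norm_num

theorem neg_one_pow_mul_self' (m : ℕ) : (-1 : ℂ)^m * (-1)^m = 1 := by
  rw [← mul_pow]; norm_num

theorem ee_sign (p : ℕ) : (-1)^p * ee p = ee p := by
  unfold ee; split_ifs with h
  · rw [h.neg_one_pow, one_mul]
  · simp

theorem ff_base_right (m : ℕ) (hm : 0 < m) (p : ℕ) (hp : 0 < p) :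
    Filter.Tendsto (symS (ff m p 0)) Filter.atTop (nhds (VV m p 0)) := by
  have h := (gmon_symS p hp).sub (symS_single (gmon p (-m)) (-m))
  have hv : VV m p 0 = ee p - gmon p (-m) := by
    rw [VV, AA_zero_right, AA_zero_left, mul_add, ee_sign, gmon, neg_one_zpow_neg]
    push_cast
    rw [neg_pow (m:ℂ) p]
    rcases neg_one_pow_eq_or ℂ p with h | h <;> rw [h] <;> ring
  rw [hv]
  refine h.congr (fun N => ?_)
  rw [← symS_sub]
  congr 1
  ext l
  unfold ff
  by_cases h0 : l = 0
  · subst h0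
    have : (0:ℤ) ≠ -m := by omega
    simp [gmon, hp.ne', hm.ne']
  · by_cases h1 : l = -m
    · simp [h1]
    · have : l + m ≠ 0 := by omega
      simp [h0, h1, this, gmon]

theorem ff_base_left (m : ℕ) (hm : 0 < m) (q : ℕ) (hq : 0 < q) :
    Filter.Tendsto (symS (ff m 0 q)) Filter.atTop (nhds (VV m 0 q)) := by
  have h := ((symS_tendsto_shift (gmon_tendsto q hq) (gmon_symS q hq) m).const_mul ((-1)^m)).sub
    (symS_single (1 / (m:ℂ)^q) 0)
  have hv : VV m 0 q = (-1)^m * ee q - (1 / (m:ℂ)^q) := by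
    rw [VV, AA_zero_right, AA_zero_left]; ring
  rw [hv]
  refine h.congr (fun N => ?_)
  rw [← symS_mul, ← symS_sub]
  congr 1
  ext l
  unfold ff
  have hg : (-1)^m * gmon q (l + m) = (-1)^l / ((l + m : ℤ) : ℂ)^q := by
    unfold gmon
    rw [zpow_add₀ (by norm_num), zpow_natCast]
    linear_combination ((-1)^l / ((l + m : ℤ) : ℂ)^q) * neg_one_pow_mul_self' m
  rw [hg]
  by_cases h0 : l = 0
  · subst h0
    simp
  · by_cases h1 : l + m = 0
    · simp [h0, h1, hq.ne']
    · simp [h0, h1]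

theorem ff_tendsto (m : ℕ) (hm : 0 < m) (p : ℕ) : ∀ q : ℕ, 0 < p + q →
    Filter.Tendsto (symS (ff m p q)) Filter.atTop (nhds (VV m p q)) := by
  induction p with
  | zero => intro q hq; exact ff_base_left m hm q (by omega)
  | succ p ihp =>
    intro q
    induction q with
    | zero => intro _; exact ff_base_right m hm (p + 1) (by omega)
    | succ q ihq =>
      intro _
      have hm' : (m : ℂ) ≠ 0 := by exact_mod_cast hm.ne'
      have h := ((ihq (by omega)).sub (ihp (q + 1) (by omega))).const_mul (1 / (m:ℂ))
      have hv : VV m (p + 1) (q + 1) = 1 / (m:ℂ) * (VV m (p + 1) q - VV m p (q + 1)) := by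
        rw [← VV_rec m hm]; field_simp
      rw [hv]
      refine h.congr (fun N => ?_)
      rw [← symS_sub, ← symS_mul]
      congr 1
      ext l
      unfold ff
      split_ifs with hl
      · have h1 : (l : ℂ) ≠ 0 := by exact_mod_cast hl.1
        have h2 : ((l + m : ℤ) : ℂ) ≠ 0 := by exact_mod_cast hl.2
        have h3 : ((l + m : ℤ) : ℂ) = l + m := by push_cast; ring
        rw [h3] at h2 ⊢
        field_simp
        ring
      · simp

theorem sum_even_range (f : ℕ → ℂ) (p : ℕ) :
    ∑ j ∈ range (p + 1), (if Even j then f j else 0) = ∑ k ∈ range (p / 2 + 1), f (2 * k) := by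
  rw [← sum_filter]
  have : (range (p + 1)).filter Even = (range (p / 2 + 1)).image (fun k => 2 * k) := by
    ext j
    simp only [mem_filter, mem_range, mem_image]
    constructor
    · rintro ⟨h, r, rfl⟩
      exact ⟨r, by omega, by omega⟩
    · rintro ⟨k, h, rfl⟩
      exact ⟨by omega, even_two_mul k⟩
  rw [this, sum_image]
  intro a _ b _ h
  simpa using h

theorem AA_eq (m p q : ℕ) (hq : 0 < q) :
    AA m p q = ∑ k ∈ range (p / 2 + 1), 2 * phi (2 * k) *
      (Nat.choose (p + q - 1 - 2 * k) (q - 1) : ℂ) * (1 / (m : ℂ) ^ (p + q - 2 * k)) := by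
  unfold AA
  rw [← sum_range_reflect]
  have := sum_even_range (fun j => 2 * phi j *
      (Nat.choose (p + q - 1 - j) (q - 1) : ℂ) * (1 / (m : ℂ) ^ (p + q - j))) p
  push_cast at this
  rw [← this]
  refine sum_congr rfl (fun j hj => ?_)
  rw [mem_range] at hj
  have e1 : p - (p + 1 - 1 - j) = j := by omega
  have e2 : p + 1 - 1 - j + q = p + q - j := by omega
  have e3 : Nat.multichoose q (p + 1 - 1 - j) = Nat.choose (p + q - 1 - j) (q - 1) := by
    rw [Nat.multichoose_eq]
    have : q + (p + 1 - 1 - j) - 1 = p + q - 1 - j := by omega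
    rw [this]
    apply Nat.choose_symm_of_eq_add
    omega
  rw [e1, e2, e3, ee]
  split_ifs <;> simp

theorem summable_lerch (c : ℂ) (hc : ‖c‖ = 1) (w : ℂ) (hw : 1 < w.re) :
    Summable (fun m : ℕ => c ^ (m + 1) / (((m + 1 : ℕ) : ℂ)) ^ w) := by
  have h := (summable_nat_add_iff 1).2 (Complex.summable_one_div_nat_cpow.2 hw)
  refine Summable.of_norm ?_
  refine h.norm.congr (fun m => ?_)
  rw [norm_div, norm_div, norm_pow, hc]
  simp

theorem hasSum_AA (c : ℂ) (hc : ‖c‖ = 1) (s : ℝ) (hs : 1 < s) (p q : ℕ) (hq : 0 < q) :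
    HasSum (fun m : ℕ => c ^ (m + 1) / (((m + 1 : ℕ) : ℂ)) ^ (s : ℂ) * AA (m + 1) p q)
      (∑ k ∈ range (p / 2 + 1), 2 * phi (2 * k) *
      (Nat.choose (p + q - 1 - 2 * k) (q - 1) : ℂ) *
        ∑' m : ℕ, c ^ (m + 1) / (((m + 1 : ℕ) : ℂ)) ^ ((s : ℂ) + p + q - 2 * k)) := by
  simp_rw [AA_eq _ p q hq, mul_sum]
  refine hasSum_sum (fun k hk => ?_)
  rw [mem_range] at hk
  have hk' : 2 * k ≤ p := by omega
  have hw : 1 < ((s : ℂ) + p + q - 2 * k).re := by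
    have : (2 * k : ℝ) ≤ p := by exact_mod_cast hk'
    have : (0 : ℝ) ≤ q := by positivity
    simp
    linarith
  have h := ((summable_lerch c hc _ hw).hasSum).mul_left
    (2 * phi (2 * k) * (Nat.choose (p + q - 1 - 2 * k) (q - 1) : ℂ))
  refine h.congr_fun (fun m => ?_)
  have hm : ((m + 1 : ℕ) : ℂ) ≠ 0 := by exact_mod_cast Nat.succ_ne_zero m
  have : (s : ℂ) + p + q - 2 * k = s + ((p + q - 2 * k : ℕ) : ℂ) := by
    rw [Nat.cast_sub (by omega)]; push_cast; ring
  rw [this, Complex.cpow_add _ _ hm, Complex.cpow_natCast]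
  field_simp

theorem summable_bound (s : ℝ) (hs : 1 < s) :
    Summable (fun lm : ℤ × ℕ => (1 / (lm.1 : ℝ) ^ 2 + 1 / ((lm.1 + (lm.2 + 1 : ℕ) : ℤ) : ℝ) ^ 2) *
      (1 / ((lm.2 + 1 : ℕ) : ℝ) ^ s)) := by
  have h0 : Summable (fun l : ℤ => (1 / (l:ℝ)^2)) := Real.summable_one_div_int_pow.2 (by norm_num)
  have h1 := (summable_nat_add_iff 1).2 (Real.summable_one_div_nat_rpow.2 hs)
  have h2 := h0.mul_of_nonneg h1 (fun l => by positivity) (fun l => by positivity)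
  have h3 : Summable (fun lm : ℤ × ℕ => (1 / ((lm.1 + (lm.2 + 1 : ℕ) : ℤ) : ℝ) ^ 2) *
      (1 / ((lm.2 + 1 : ℕ) : ℝ) ^ s)) := by
    refine h2.comp_injective (i := fun lm : ℤ × ℕ => (lm.1 + (lm.2 + 1 : ℕ), lm.2)) ?_
    rintro ⟨a, b⟩ ⟨c, d⟩ h
    simp only [Prod.mk.injEq] at h
    obtain ⟨h1, rfl⟩ := h
    simpa using h1
  refine (h2.add h3).congr (fun lm => ?_)
  ring

theorem T_term_eq (p q : ℕ) (s : ℝ) (l : ℤ) (m : ℕ) :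
    (if l ≠ 0 ∧ l + ((m : ℤ) + 1) ≠ 0 then
      (-1 : ℂ) ^ l * Complex.I ^ (m + 1) /
        ((l : ℂ) ^ p * (((m + 1 : ℕ) : ℂ)) ^ (s : ℂ) *
          (((l + (m : ℤ) + 1 : ℤ) : ℂ)) ^ q)
    else 0) = Complex.I ^ (m + 1) / (((m + 1 : ℕ) : ℂ)) ^ (s : ℂ) * ff (m + 1) p q l := by
  unfold ff
  have e : ((m + 1 : ℕ) : ℤ) = (m : ℤ) + 1 := by push_cast; ring
  rw [e, ← add_assoc]
  split_ifs with h
  · rw [div_mul_div_comm]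
    congr 1
    · ring
    · ring
  · simp

theorem ff_norm_le (m p q : ℕ) (hp : 0 < p) (hq : 0 < q) (l : ℤ) :
    ‖ff m p q l‖ ≤ 1 / (l : ℝ) ^ 2 + 1 / ((l + m : ℤ) : ℝ) ^ 2 := by
  unfold ff
  split_ifs with h
  · rw [norm_div, norm_neg_one_zpow, norm_mul, norm_pow, norm_pow, Complex.norm_intCast,
      Complex.norm_intCast]
    have h1 : (1:ℝ) ≤ |(l:ℝ)| := by exact_mod_cast Int.one_le_abs h.1
    have h2 : (1:ℝ) ≤ |((l + m : ℤ):ℝ)| := by exact_mod_cast Int.one_le_abs h.2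
    rw [← sq_abs (l:ℝ), ← sq_abs ((l + m : ℤ):ℝ)]
    generalize |(l:ℝ)| = a at *
    generalize |((l + m : ℤ):ℝ)| = b at *
    have h3 : 1 / (a ^ p * b ^ q) ≤ 1 / (a * b) := by
      apply one_div_le_one_div_of_le (by positivity)
      exact mul_le_mul (le_self_pow₀ h1 hp.ne') (le_self_pow₀ h2 hq.ne') (by positivity)
        (by positivity)
    refine h3.trans ?_
    have e1 : 1 / (a * b) = (1 / a) * (1 / b) := by field_simp
    have e2 : 1 / a ^ 2 = (1 / a) ^ 2 := by field_simp
    have e3 : 1 / b ^ 2 = (1 / b) ^ 2 := by field_simp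
    rw [e1, e2, e3]
    nlinarith [sq_nonneg (1 / a - 1 / b), sq_nonneg (1 / a), sq_nonneg (1 / b)]
  · simp only [norm_zero]
    positivity

theorem T_summable (p q : ℕ) (hp : 0 < p) (hq : 0 < q) (s : ℝ) (hs : 1 < s) :
    Summable (fun lm : ℤ × ℕ => Complex.I ^ (lm.2 + 1) /
      (((lm.2 + 1 : ℕ) : ℂ)) ^ (s : ℂ) * ff (lm.2 + 1) p q lm.1) := by
  refine Summable.of_norm_bounded (summable_bound s hs) (fun lm => ?_)
  rw [norm_mul, norm_div, norm_pow, Complex.norm_I, one_pow,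
    Complex.norm_natCast_cpow_of_pos (Nat.succ_pos _), Complex.ofReal_re, mul_comm]
  exact mul_le_mul_of_nonneg_right (ff_norm_le _ p q hp hq _) (by positivity)

theorem ff_tsum (m p q : ℕ) (hm : 0 < m) (hp : 0 < p) (hq : 0 < q) :
    ∑' l : ℤ, ff m p q l = VV m p q := by
  have h0 : Summable (fun l : ℤ => (1 / (l:ℝ)^2)) := Real.summable_one_div_int_pow.2 (by norm_num)
  have h1 : Summable (fun l : ℤ => 1 / ((l + m : ℤ):ℝ)^2) :=
    h0.comp_injective (add_left_injective (m : ℤ))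
  have hs : Summable (ff m p q) :=
    Summable.of_norm_bounded (h0.add h1) (ff_norm_le m p q hp hq)
  exact tendsto_nhds_unique (symS_of_hasSum hs.hasSum) (ff_tendsto m hm p q (by omega))

/-- Evaluation of `T(p,s,q;-1,i)` in terms of `φ` and Lerch values
(Lemma 6.2, first formula, of Komori–Matsumoto–Tsumura). -/
theorem T_eval_negone_I (p q : ℕ) (hp : 0 < p) (hq : 0 < q) (s : ℝ) (hs : 1 < s) :
    T p (s : ℂ) q (-1) Complex.I =
      2 * (-1 : ℂ) ^ p * ∑ k ∈ range (p / 2 + 1), phi (2 * k) *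
          (Nat.choose (p + q - 1 - 2 * k) (q - 1) : ℂ) *
          phiQuarter ((s : ℂ) + p + q - 2 * k) +
      2 * (-1 : ℂ) ^ p * ∑ k ∈ range (q / 2 + 1), phi (2 * k) *
          (Nat.choose (p + q - 1 - 2 * k) (p - 1) : ℂ) *
          phiNegQuarter ((s : ℂ) + p + q - 2 * k) := by
  have hT : T p (s : ℂ) q (-1) Complex.I = ∑' m : ℕ, Complex.I ^ (m + 1) /
      (((m + 1 : ℕ) : ℂ)) ^ (s : ℂ) * VV (m + 1) p q := by
    unfold T
    rw [tsum_congr (fun lm : ℤ × ℕ => T_term_eq p q s lm.1 lm.2)]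
    have hS := T_summable p q hp hq s hs
    rw [← (Equiv.prodComm ℕ ℤ).tsum_eq]
    have hS' := (Equiv.prodComm ℕ ℤ).summable_iff.2 hS
    refine hS'.tsum_prod.trans ?_
    refine tsum_congr (fun m => ?_)
    rw [← ff_tsum (m + 1) p q (Nat.succ_pos m) hp hq, ← tsum_mul_left]
    rfl
  rw [hT]
  have h1 := hasSum_AA Complex.I (by simp) s hs p q hq
  have h2 := hasSum_AA (-Complex.I) (by simp) s hs q p hp
  have h := (h1.add h2).mul_left ((-1 : ℂ) ^ p)
  have h' : ∀ m : ℕ, Complex.I ^ (m + 1) / (((m + 1 : ℕ) : ℂ)) ^ (s : ℂ) * VV (m + 1) p q =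
      (-1 : ℂ) ^ p * (Complex.I ^ (m + 1) / (((m + 1 : ℕ) : ℂ)) ^ (s : ℂ) * AA (m + 1) p q +
        (-Complex.I) ^ (m + 1) / (((m + 1 : ℕ) : ℂ)) ^ (s : ℂ) * AA (m + 1) q p) := by
    intro m
    rw [VV, neg_pow Complex.I (m + 1)]
    ring
  rw [tsum_congr h', h.tsum_eq, mul_add, mul_sum, mul_sum, mul_sum, mul_sum]
  unfold phiQuarter phiNegQuarter
  congr 1
  · refine sum_congr rfl (fun k _ => ?_)
    ring
  · refine sum_congr rfl (fun k _ => ?_)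
    have e1 : q + p - 1 - 2 * k = p + q - 1 - 2 * k := by omega
    have e2 : (s : ℂ) + q + p - 2 * k = s + p + q - 2 * k := by ring
    rw [e1, e2]
    ring
end
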